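/- arXiv:2111.10660 — 3 statements merged into one kernel-verified Lean document; each statement's English description precedes it below -/
import Mathlib

section
/- Let A_ψ be the 3×3 real matrix with (A_ψ)₁₂ = (A_ψ)₂₃ = 1 and all other entries 0, C_ψ the 1×3 real matrix [1 0 0], and B_{ω,ψ} the 3×1 real matrix (0,0,1)ᵀ. Let P be a symmetric positive-definite real 3×3 matrix and W a real 3×1 matrix such that A_ψᵀ·P + P·A_ψ + C_ψᵀ·Wᵀ + W·C_ψ + I₃ is negative semidefinite, and set L := −P⁻¹·W. Then for every e ∈ ℝ³ and every ω ∈ ℝ: (1/2)·eᵀ·((A_ψ − L·C_ψ)ᵀ·P + P·(A_ψ − L·C_ψ))·e + eᵀ·P·B_{ω,ψ}·ω ≤ −(1/2)·‖e‖² + ‖e‖·‖P·B_{ω,ψ}‖·|ω|, where ‖·‖ denotes the Euclidean norm and P·B_{ω,ψ} is regarded as a vector in ℝ³. -/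
/-!
Since `P` is symmetric and invertible, `L = -P⁻¹W` gives `P L = -W` and `Lᵀ P = -Wᵀ`, so the
closed-loop Lyapunov expression is `Aψᵀ P + P Aψ + Cψᵀ Wᵀ + W Cψ`, and the LMI bounds its quadratic
form by `-‖e‖²`. The disturbance term is controlled by the Cauchy–Schwarz inequality.
-/

open Matrix

/-- The Euclidean norm of a vector in `ℝⁿ`. -/
noncomputable def euclNorm {n : ℕ} (x : Fin n → ℝ) : ℝ := Real.sqrt (∑ i, x i ^ 2)

/-- The rotational system matrix `A_ψ`. -/
def Aψ : Matrix (Fin 3) (Fin 3) ℝ := !![0, 1, 0; 0, 0, 1; 0, 0, 0]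

/-- The rotational output matrix `C_ψ = [1 0 0]`. -/
def Cψ : Matrix (Fin 1) (Fin 3) ℝ := !![1, 0, 0]

/-- The rotational disturbance input matrix `B_{ω,ψ} = (0,0,1)ᵀ`. -/
def Bωψ : Matrix (Fin 3) (Fin 1) ℝ := !![0; 0; 1]

lemma euclNorm_sq {n : ℕ} (x : Fin n → ℝ) : euclNorm x ^ 2 = x ⬝ᵥ x := by
  rw [euclNorm, Real.sq_sqrt (Finset.sum_nonneg fun i _ => sq_nonneg _)]
  simp [dotProduct, sq]

lemma abs_dotProduct_le_euclNorm {n : ℕ} (x y : Fin n → ℝ) :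
    |x ⬝ᵥ y| ≤ euclNorm x * euclNorm y := by
  rw [euclNorm, euclNorm, ← Real.sqrt_mul (Finset.sum_nonneg fun i _ => sq_nonneg _)]
  exact Real.abs_le_sqrt (Finset.sum_mul_sq_le_sq_mul_sq _ _ _)

/-- The substitution `W = -P L` makes the Lyapunov expression affine in `P` and `W`. -/
lemma lyapunov_substitution {P : Matrix (Fin 3) (Fin 3) ℝ} (W : Matrix (Fin 3) (Fin 1) ℝ)
    (hP : P.PosDef) :
    (Aψ - -(P⁻¹ * W) * Cψ)ᵀ * P + P * (Aψ - -(P⁻¹ * W) * Cψ)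
      = Aψᵀ * P + P * Aψ + Cψᵀ * Wᵀ + W * Cψ := by
  have hdet : IsUnit P.det := hP.det_pos.ne'.isUnit
  have hsymm : Pᵀ = P := by
    simpa [Matrix.IsHermitian, conjTranspose_eq_transpose_of_trivial] using hP.isHermitian
  have hright : P * (Aψ - -(P⁻¹ * W) * Cψ) = P * Aψ + W * Cψ := by
    rw [Matrix.neg_mul, sub_neg_eq_add, Matrix.mul_add, ← Matrix.mul_assoc, ← Matrix.mul_assoc,
      Matrix.mul_nonsing_inv P hdet, Matrix.one_mul]
  -- By symmetry of `P`, the other summand is the transpose of this one.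
  have hleft : (Aψ - -(P⁻¹ * W) * Cψ)ᵀ * P = Aψᵀ * P + Cψᵀ * Wᵀ := by
    have h := congrArg Matrix.transpose hright
    rwa [transpose_mul, transpose_add, transpose_mul, transpose_mul, hsymm] at h
  rw [hleft, hright]
  abel

/-- Quadratic decrease bound (eqs. (23)–(24)) in the proof of Theorem 1. -/
theorem stmt_3 (P : Matrix (Fin 3) (Fin 3) ℝ) (W : Matrix (Fin 3) (Fin 1) ℝ)
    (hP : P.PosDef)
    (hLMI : (-(Aψᵀ * P + P * Aψ + Cψᵀ * Wᵀ + W * Cψ + 1)).PosSemidef)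
    (L : Matrix (Fin 3) (Fin 1) ℝ) (hL : L = -(P⁻¹ * W)) :
    ∀ (e : Fin 3 → ℝ) (ω : ℝ),
      (1 / 2) * (e ⬝ᵥ ((Aψ - L * Cψ)ᵀ * P + P * (Aψ - L * Cψ)).mulVec e)
          + e ⬝ᵥ (P * Bωψ).mulVec ![ω]
        ≤ -(1 / 2) * euclNorm e ^ 2
          + euclNorm e * euclNorm (fun i => (P * Bωψ) i 0) * |ω| := by
  intro e ω
  rw [hL, lyapunov_substitution W hP]
  have hquad := hLMI.dotProduct_mulVec_nonneg e
  rw [star_trivial, neg_mulVec, add_mulVec, one_mulVec, dotProduct_neg, dotProduct_add,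
    ← euclNorm_sq] at hquad
  have hdist : e ⬝ᵥ (P * Bωψ).mulVec ![ω] = (e ⬝ᵥ fun i => (P * Bωψ) i 0) * ω := by
    simp only [dotProduct, mulVec, Finset.univ_unique, Fin.default_eq_zero, Finset.sum_singleton,
      Matrix.cons_val_zero, Finset.sum_mul, mul_assoc]
  have hcs : (e ⬝ᵥ fun i => (P * Bωψ) i 0) * ω
      ≤ euclNorm e * euclNorm (fun i => (P * Bωψ) i 0) * |ω| := by
    refine (le_abs_self _).trans ?_
    rw [abs_mul]
    exact mul_le_mul_of_nonneg_right (abs_dotProduct_le_euclNorm _ _) (abs_nonneg _)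
  rw [hdist]
  linarith
end

section
/- For ψ ∈ ℝ, let R₂(ψ) be the 2×2 rotation matrix [[cos ψ, −sin ψ], [sin ψ, cos ψ]], S_p the 2×2 matrix [[0, −1], [1, 0]], T_p(ψ) the 6×6 block-diagonal matrix diag(R₂(ψ)ᵀ, I₂, I₂), S_{T_p} the 6×6 matrix whose top-left 2×2 block equals S_pᵀ and whose other entries are 0, A_p(ψ) the 6×6 block matrix whose (rows 1–2, columns 3–4) block is R₂(ψ), whose (rows 3–4, columns 5–6) block is I₂ and whose other entries are 0, A_{0,p} the 6×6 block matrix whose (rows 1–2, columns 3–4) and (rows 3–4, columns 5–6) blocks are I₂ and whose other entries are 0, C_p the 2×6 matrix [I₂ 0 0], and B_{ω,p} the 6×2 matrix whose bottom 2×2 block is I₂ and whose other entries are 0. Let P be an invertible real 6×6 matrix and W a real 6×2 matrix, and for each ψ define the observer gain L_p(ψ) := −T_p(ψ)ᵀ·P⁻¹·W·R₂(ψ)ᵀ. Let ψ : ℝ → ℝ be differentiable with ψ'(t) = r(t), let ω : ℝ → ℝ², n : ℝ → ℝ², and let e : ℝ → ℝ⁶ be differentiable with e'(t) = (A_p(ψ(t))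 − L_p(ψ(t))·C_p)·e(t) + B_{ω,p}·ω(t) − L_p(ψ(t))·n(t) for all t. Then the transformed error z(t) := T_p(ψ(t))·e(t) is differentiable and satisfies z'(t) = (A_{0,p} + r(t)·S_{T_p} + P⁻¹·W·C_p)·z(t) + B_{ω,p}·ω(t) + P⁻¹·W·R₂(ψ(t))ᵀ·n(t) for all t. -/
/-!
The change of coordinates `z = T_p(ψ) e` is differentiated by the product rule. The derivative of
`T_p` along `ψ` is `r S_{T_p} T_p(ψ)`, and the remaining terms are moved past `T_p` using four
algebraic identities: `T_p T_pᵀ = 1`, `T_p A_p = A_{0,p} T_p`, `R₂ᵀ C_p = C_p T_p` and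
`T_p B_{ω,p} = B_{ω,p}`. The first and third turn the gain into the constant injection `P⁻¹ W`.
-/


open Matrix

/-- The planar rotation matrix `R₂(ψ)`. -/
noncomputable def R2 (ψ : ℝ) : Matrix (Fin 2) (Fin 2) ℝ :=
  !![Real.cos ψ, -Real.sin ψ; Real.sin ψ, Real.cos ψ]

/-- The coordinate transformation matrix `T_p(ψ) = diag(R₂(ψ)ᵀ, I₂, I₂)`. -/
noncomputable def Tp (ψ : ℝ) : Matrix (Fin 6) (Fin 6) ℝ :=
  !![Real.cos ψ,  Real.sin ψ, 0, 0, 0, 0;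
     -Real.sin ψ, Real.cos ψ, 0, 0, 0, 0;
     0, 0, 1, 0, 0, 0;
     0, 0, 0, 1, 0, 0;
     0, 0, 0, 0, 1, 0;
     0, 0, 0, 0, 0, 1]

/-- The 6×6 matrix `S_{T_p}` whose top-left 2×2 block is `S_pᵀ = [[0,1],[−1,0]]`
and whose other entries are 0. -/
def STp : Matrix (Fin 6) (Fin 6) ℝ :=
  !![0, 1, 0, 0, 0, 0;
     -1, 0, 0, 0, 0, 0;
     0, 0, 0, 0, 0, 0;
     0, 0, 0, 0, 0, 0;
     0, 0, 0, 0, 0, 0;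
     0, 0, 0, 0, 0, 0]

/-- The positional system matrix `A_p(ψ)`: its (rows 1–2, columns 3–4) block is
`R₂(ψ)`, its (rows 3–4, columns 5–6) block is `I₂`, all other entries are 0. -/
noncomputable def Ap (ψ : ℝ) : Matrix (Fin 6) (Fin 6) ℝ :=
  !![0, 0, Real.cos ψ, -Real.sin ψ, 0, 0;
     0, 0, Real.sin ψ, Real.cos ψ, 0, 0;
     0, 0, 0, 0, 1, 0;
     0, 0, 0, 0, 0, 1;
     0, 0, 0, 0, 0, 0;
     0, 0, 0, 0, 0, 0]

/-- The constant matrix `A_{0,p}`: its (rows 1–2, columns 3–4) and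
(rows 3–4, columns 5–6) blocks are `I₂`, all other entries are 0. -/
def A0p : Matrix (Fin 6) (Fin 6) ℝ :=
  !![0, 0, 1, 0, 0, 0;
     0, 0, 0, 1, 0, 0;
     0, 0, 0, 0, 1, 0;
     0, 0, 0, 0, 0, 1;
     0, 0, 0, 0, 0, 0;
     0, 0, 0, 0, 0, 0]

/-- The positional output matrix `C_p = [I₂ 0 0]`. -/
def Cp : Matrix (Fin 2) (Fin 6) ℝ :=
  !![1, 0, 0, 0, 0, 0;
     0, 1, 0, 0, 0, 0]

/-- The positional disturbance input matrix `B_{ω,p}`: its bottom 2×2 block is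
`I₂`, all other entries are 0. -/
def Bωp : Matrix (Fin 6) (Fin 2) ℝ :=
  !![0, 0;
     0, 0;
     0, 0;
     0, 0;
     1, 0;
     0, 1]

theorem Tp_mul_transpose (x : ℝ) : Tp x * (Tp x)ᵀ = 1 := by
  have h := Real.sin_sq_add_cos_sq x
  ext i j
  fin_cases i <;> fin_cases j <;>
    simp [Tp, Matrix.mul_apply, Fin.sum_univ_six] <;> linarith

theorem Tp_mul_Ap (x : ℝ) : Tp x * Ap x = A0p * Tp x := by
  have h := Real.sin_sq_add_cos_sq x
  ext i j
  fin_cases i <;> fin_cases j <;>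
    simp [Tp, Ap, A0p, Matrix.mul_apply, Fin.sum_univ_six] <;> linarith

theorem R2_transpose_mul_Cp (x : ℝ) : (R2 x)ᵀ * Cp = Cp * Tp x := by
  ext i j
  fin_cases i <;> fin_cases j <;>
    simp [Tp, R2, Cp, Matrix.mul_apply, Fin.sum_univ_six]

theorem Tp_mul_Bωp (x : ℝ) : Tp x * Bωp = Bωp := by
  ext i j
  fin_cases i <;> fin_cases j <;>
    simp [Tp, Bωp, Matrix.mul_apply, Fin.sum_univ_six]

theorem hasDerivAt_Tp_apply {ψ : ℝ → ℝ} {r t : ℝ} (hψ : HasDerivAt ψ r t) (i j : Fin 6) :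
    HasDerivAt (fun s => Tp (ψ s) i j) ((r • (STp * Tp (ψ t))) i j) t := by
  have hc := hψ.cos
  have hs := hψ.sin
  fin_cases i <;> fin_cases j <;>
    simp [Tp, STp, hasDerivAt_const]
  · exact hc.congr_deriv (by ring)
  · exact hs.congr_deriv (by ring)
  · exact hs.neg.congr_deriv (by ring)
  · exact hc.congr_deriv (by ring)

/-- Product rule for `T_p(ψ) e`. -/
theorem hasDerivAt_Tp_mulVec {ψ : ℝ → ℝ} {r t : ℝ} (hψ : HasDerivAt ψ r t)
    {e : ℝ → Fin 6 → ℝ} {e' : Fin 6 → ℝ} (he : HasDerivAt e e' t) :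
    HasDerivAt (fun s => (Tp (ψ s)).mulVec (e s))
      ((r • (STp * Tp (ψ t))).mulVec (e t) + (Tp (ψ t)).mulVec e') t := by
  rw [hasDerivAt_pi] at he ⊢
  intro i
  have := HasDerivAt.fun_sum (u := Finset.univ) fun j _ =>
    (hasDerivAt_Tp_apply hψ i j).mul (he j)
  simp only [Finset.sum_add_distrib] at this
  exact this

/-- Transformed positional error-dynamics identity (eq. (41)) in the proof of
Theorem 2: with the gain `L_p(ψ) = −T_p(ψ)ᵀ·P⁻¹·W·R₂(ψ)ᵀ`, the transformed
error `z = T_p(ψ)·e` obeys linear dynamics with a constant output-injection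
term. -/
theorem stmt_13 (P : Matrix (Fin 6) (Fin 6) ℝ) (hP : IsUnit P.det)
    (W : Matrix (Fin 6) (Fin 2) ℝ)
    (Lp : ℝ → Matrix (Fin 6) (Fin 2) ℝ)
    (hLp : ∀ ψ : ℝ, Lp ψ = -((Tp ψ)ᵀ * P⁻¹ * W * (R2 ψ)ᵀ))
    (ψ : ℝ → ℝ) (r : ℝ → ℝ) (hψ : ∀ t, HasDerivAt ψ (r t) t)
    (ω : ℝ → Fin 2 → ℝ) (n : ℝ → Fin 2 → ℝ)
    (e : ℝ → Fin 6 → ℝ)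
    (he : ∀ t, HasDerivAt e
      ((Ap (ψ t) - Lp (ψ t) * Cp).mulVec (e t) + Bωp.mulVec (ω t)
        - (Lp (ψ t)).mulVec (n t)) t) :
    ∀ t, HasDerivAt (fun s => (Tp (ψ s)).mulVec (e s))
      ((A0p + r t • STp + P⁻¹ * W * Cp).mulVec ((Tp (ψ t)).mulVec (e t))
        + Bωp.mulVec (ω t) + (P⁻¹ * W * (R2 (ψ t))ᵀ).mulVec (n t)) t := by
  intro t
  refine (hasDerivAt_Tp_mulVec (hψ t) (he t)).congr_deriv ?_
  have hL : Tp (ψ t) * Lp (ψ t) = -(P⁻¹ * W * (R2 (ψ t))ᵀ) := by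
    rw [hLp, Matrix.mul_neg]
    simp only [← Matrix.mul_assoc]
    rw [Tp_mul_transpose, Matrix.one_mul]
  have hLC : Tp (ψ t) * (Lp (ψ t) * Cp) = -(P⁻¹ * W * Cp * Tp (ψ t)) := by
    rw [← Matrix.mul_assoc, hL, Matrix.neg_mul, Matrix.mul_assoc _ _ Cp,
      R2_transpose_mul_Cp, ← Matrix.mul_assoc]
  simp only [Matrix.mulVec_add, Matrix.mulVec_sub, Matrix.mulVec_mulVec,
    Matrix.add_mul, Matrix.smul_mul, hL, hLC, Tp_mul_Ap, Tp_mul_Bωp, Matrix.sub_mulVec,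
    Matrix.add_mulVec, Matrix.neg_mulVec]
  abel
end

section
/- For ψ ∈ ℝ, let R₂(ψ) be the 2×2 rotation matrix [[cos ψ, −sin ψ], [sin ψ, cos ψ]], S_p the 2×2 matrix [[0, −1], [1, 0]], S_{T_p} the 6×6 matrix whose top-left 2×2 block equals S_pᵀ and whose other entries are 0, A_{0,p} the 6×6 block matrix whose (rows 1–2, columns 3–4) and (rows 3–4, columns 5–6) blocks are I₂ and whose other entries are 0, C_p the 2×6 matrix [I₂ 0 0], and B_{ω,p} the 6×2 matrix whose bottom 2×2 block is I₂ and whose other entries are 0. Let P be a symmetric positive-definite real 6×6 matrix, W a real 6×2 matrix, and r_min ≤ r_max real numbers such that both matrices A_{0,p}ᵀ·P + P·A_{0,p} + C_pᵀ·Wᵀ + W·C_p + r_i·(S_{T_p}ᵀ·P + P·S_{T_p}) + I₆, for r_i ∈ {r_min, r_max}, are negative semidefinite. Let r : ℝ → ℝ satisfy r(t) ∈ [r_min, r_max] for all t, let ψ : ℝ → ℝ, let ω : ℝ → ℝ² satisfy ‖ω(t)‖ ≤ ω* and n : ℝ → ℝ² satisfy ‖n(t)‖ ≤ n* for all t, let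 θ ∈ (0,1), and let z : ℝ → ℝ⁶ be differentiable with z'(t) = (A_{0,p} + r(t)·S_{T_p} + P⁻¹·W·C_p)·z(t) + B_{ω,p}·ω(t) + P⁻¹·W·R₂(ψ(t))ᵀ·n(t) for all t. Then at every time t at which ‖z(t)‖ ≥ 2·(‖P·B_{ω,p}‖·ω* + ‖W‖·n*)/θ, the function V(s) := (1/2)·z(s)ᵀ·P·z(s) is differentiable at t and its derivative at t is at most −(1/2)·(1−θ)·‖z(t)‖², where vector norms are Euclidean and ‖P·B_{ω,p}‖ and ‖W‖ are the ℓ²→ℓ² operator norms of those 6×2 matrices. -/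
/-!
Since `P` is symmetric, `V' = zᵀ P z'`, and multiplying the dynamics by `P` cancels every `P⁻¹`:
`V' = zᵀ (P A₀ + r P S + W C) z + zᵀ (P B) ω + zᵀ W R₂ᵀ n`.
Twice the quadratic term is `zᵀ (A₀ᵀ P + P A₀ + Cᵀ Wᵀ + W C + r (Sᵀ P + P S)) z`, which is affine
in `r`; being at most `-‖z‖²` at both end points of `[rmin, rmax]`, it is at most `-‖z‖²` in
between (`affine_nonpos`). By Cauchy-Schwarz, and because `R₂ᵀ` is an isometry, the other two terms
are at most `‖z‖ (‖P B‖ ω* + ‖W‖ n*) ≤ (θ / 2) ‖z‖²` outside the ball.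
-/

open Matrix

/-- The `ℓ²→ℓ²` operator norm (largest singular value) of a real matrix. -/
noncomputable def matOpNorm {n m : ℕ} (M : Matrix (Fin n) (Fin m) ℝ) : ℝ :=
  ‖LinearMap.toContinuousLinearMap (Matrix.toEuclideanLin M)‖

lemma euclNorm_eq_norm {n : ℕ} (x : Fin n → ℝ) : euclNorm x = ‖WithLp.toLp 2 x‖ := by
  simp [euclNorm, EuclideanSpace.norm_eq]

lemma euclNorm_nonneg {n : ℕ} (x : Fin n → ℝ) : 0 ≤ euclNorm x := Real.sqrt_nonneg _

lemma dotProduct_le_euclNorm {n : ℕ} (x y : Fin n → ℝ) :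
    x ⬝ᵥ y ≤ euclNorm x * euclNorm y := by
  have h := Finset.sum_mul_sq_le_sq_mul_sq Finset.univ x y
  rw [euclNorm, euclNorm, ← Real.sqrt_mul (Finset.sum_nonneg fun i _ => sq_nonneg _)]
  exact Real.le_sqrt_of_sq_le h

lemma matOpNorm_nonneg {n m : ℕ} (M : Matrix (Fin n) (Fin m) ℝ) : 0 ≤ matOpNorm M :=
  norm_nonneg _

lemma euclNorm_mulVec_le {n m : ℕ} (M : Matrix (Fin n) (Fin m) ℝ) (x : Fin m → ℝ) :
    euclNorm (M.mulVec x) ≤ matOpNorm M * euclNorm x := by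
  rw [euclNorm_eq_norm, euclNorm_eq_norm]
  exact (LinearMap.toContinuousLinearMap (Matrix.toEuclideanLin M)).le_opNorm (WithLp.toLp 2 x)

lemma dotProduct_mulVec_le {n m : ℕ} (M : Matrix (Fin n) (Fin m) ℝ) (x : Fin n → ℝ)
    (y : Fin m → ℝ) {b : ℝ} (hb : euclNorm y ≤ b) :
    x ⬝ᵥ M.mulVec y ≤ euclNorm x * (matOpNorm M * b) :=
  (dotProduct_le_euclNorm _ _).trans <| mul_le_mul_of_nonneg_left
    ((euclNorm_mulVec_le M y).trans (mul_le_mul_of_nonneg_left hb (matOpNorm_nonneg M)))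
    (euclNorm_nonneg x)

lemma euclNorm_R2_transpose_mulVec (ψ : ℝ) (x : Fin 2 → ℝ) :
    euclNorm ((R2 ψ)ᵀ.mulVec x) = euclNorm x := by
  unfold euclNorm
  congr 1
  simp [R2, mulVec, dotProduct, Fin.sum_univ_two]
  linear_combination (x 0 ^ 2 + x 1 ^ 2) * Real.sin_sq_add_cos_sq ψ

lemma affine_nonpos {a b r₁ r₂ r : ℝ} (h₁ : a + r₁ * b ≤ 0) (h₂ : a + r₂ * b ≤ 0)
    (hr : r ∈ Set.Icc r₁ r₂) : a + r * b ≤ 0 := by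
  rcases le_total 0 b with hb | hb
  · nlinarith [mul_le_mul_of_nonneg_right hr.2 hb]
  · nlinarith [mul_le_mul_of_nonpos_right hr.1 hb]

/-- A matrix inequality at one vertex of the range of `r`, evaluated on the vector `x`. The
transposed terms fold onto their untransposed partners, leaving a form that is affine in `ρ`. -/
lemma quadForm_of_lmi {P A S : Matrix (Fin 6) (Fin 6) ℝ} (hP : Pᵀ = P)
    {W : Matrix (Fin 6) (Fin 2) ℝ} {C : Matrix (Fin 2) (Fin 6) ℝ} {ρ : ℝ}
    (h : (-(Aᵀ * P + P * A + Cᵀ * Wᵀ + W * C + ρ • (Sᵀ * P + P * S) + 1)).PosSemidef)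
    (x : Fin 6 → ℝ) :
    (2 * (x ⬝ᵥ (P * A).mulVec x + x ⬝ᵥ (W * C).mulVec x) + x ⬝ᵥ x)
      + ρ * (2 * (x ⬝ᵥ (P * S).mulVec x)) ≤ 0 := by
  have h0 := h.dotProduct_mulVec_nonneg x
  have hA : Aᵀ * P = (P * A)ᵀ := by rw [transpose_mul, hP]
  have hS : Sᵀ * P = (P * S)ᵀ := by rw [transpose_mul, hP]
  rw [hA, hS, ← transpose_mul] at h0
  simp only [star_trivial, neg_mulVec, add_mulVec, smul_mulVec, one_mulVec, dotProduct_neg,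
    dotProduct_add, dotProduct_smul, dotProduct_transpose_mulVec, smul_eq_mul] at h0
  linarith

lemma hasDerivAt_half_quadForm {n : ℕ} {P : Matrix (Fin n) (Fin n) ℝ} (hP : Pᵀ = P)
    {z : ℝ → Fin n → ℝ} {z' : Fin n → ℝ} {t : ℝ} (hz : HasDerivAt z z' t) :
    HasDerivAt (fun s => (1 / 2) * (z s ⬝ᵥ P.mulVec (z s))) (z t ⬝ᵥ P.mulVec z') t := by
  have hi := hasDerivAt_pi.1 hz
  have hPz : ∀ i, HasDerivAt (fun s => P.mulVec (z s) i) (P.mulVec z' i) t := fun i => by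
    simp only [mulVec, dotProduct]
    exact HasDerivAt.fun_sum fun j _ => (hi j).const_mul (P i j)
  have hV : HasDerivAt (fun s => z s ⬝ᵥ P.mulVec (z s))
      (∑ i, (z' i * P.mulVec (z t) i + z t i * P.mulVec z' i)) t := by
    simp only [dotProduct]
    exact HasDerivAt.fun_sum fun i _ => (hi i).mul (hPz i)
  refine (hV.const_mul (1 / 2)).congr_deriv ?_
  have hsymm : z' ⬝ᵥ P.mulVec (z t) = z t ⬝ᵥ P.mulVec z' := by
    conv_lhs => rw [← hP]
    exact dotProduct_transpose_mulVec P z' (z t)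
  rw [Finset.sum_add_distrib]
  change 1 / 2 * (z' ⬝ᵥ P.mulVec (z t) + z t ⬝ᵥ P.mulVec z') = _
  rw [hsymm]
  ring

/-- Core decrease estimate of Theorem 2 (eqs. (46)–(47), with
`k_{ω,p} = k_{n,p} = 1`): outside a ball whose radius is proportional to the
disturbance bound `ω*` and noise bound `n*`, the Lyapunov function
`V(z) = (1/2)zᵀPz` strictly decreases along the transformed positional error
dynamics. -/
theorem stmt_15 (P : Matrix (Fin 6) (Fin 6) ℝ) (hP : P.PosDef)
    (W : Matrix (Fin 6) (Fin 2) ℝ) (rmin rmax : ℝ) (hr : rmin ≤ rmax)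
    (hLMImin : (-(A0pᵀ * P + P * A0p + Cpᵀ * Wᵀ + W * Cp
      + rmin • (STpᵀ * P + P * STp) + 1)).PosSemidef)
    (hLMImax : (-(A0pᵀ * P + P * A0p + Cpᵀ * Wᵀ + W * Cp
      + rmax • (STpᵀ * P + P * STp) + 1)).PosSemidef)
    (r : ℝ → ℝ) (hrt : ∀ t, r t ∈ Set.Icc rmin rmax)
    (ψ : ℝ → ℝ) (ω : ℝ → Fin 2 → ℝ) (n : ℝ → Fin 2 → ℝ)
    (ωstar nstar : ℝ) (hω : ∀ t, euclNorm (ω t) ≤ ωstar)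
    (hn : ∀ t, euclNorm (n t) ≤ nstar)
    (θ : ℝ) (hθ : θ ∈ Set.Ioo (0 : ℝ) 1)
    (z : ℝ → Fin 6 → ℝ)
    (hz : ∀ t, HasDerivAt z
      ((A0p + r t • STp + P⁻¹ * W * Cp).mulVec (z t)
        + Bωp.mulVec (ω t) + (P⁻¹ * W * (R2 (ψ t))ᵀ).mulVec (n t)) t) :
    ∀ t, 2 * (matOpNorm (P * Bωp) * ωstar + matOpNorm W * nstar) / θ
        ≤ euclNorm (z t) →
      DifferentiableAt ℝ (fun s => (1 / 2) * (z s ⬝ᵥ P.mulVec (z s))) t ∧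
        deriv (fun s => (1 / 2) * (z s ⬝ᵥ P.mulVec (z s))) t
          ≤ -(1 / 2) * (1 - θ) * euclNorm (z t) ^ 2 := by
  intro t ht
  have hPt : Pᵀ = P := by simpa using hP.isHermitian.eq
  have hV := hasDerivAt_half_quadForm hPt (hz t)
  refine ⟨hV.differentiableAt, ?_⟩
  rw [hV.deriv]
  have hPP : P * P⁻¹ = 1 := mul_nonsing_inv P ((isUnit_iff_isUnit_det P).1 hP.isUnit)
  have hcancel : ∀ {k : ℕ} (M : Matrix (Fin 6) (Fin k) ℝ), P * (P⁻¹ * M) = M := fun M => by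
    rw [← Matrix.mul_assoc, hPP, Matrix.one_mul]
  have hexp : z t ⬝ᵥ P.mulVec ((A0p + r t • STp + P⁻¹ * W * Cp).mulVec (z t)
        + Bωp.mulVec (ω t) + (P⁻¹ * W * (R2 (ψ t))ᵀ).mulVec (n t))
      = z t ⬝ᵥ (P * A0p).mulVec (z t) + r t * (z t ⬝ᵥ (P * STp).mulVec (z t))
        + z t ⬝ᵥ (W * Cp).mulVec (z t) + z t ⬝ᵥ (P * Bωp).mulVec (ω t)
        + z t ⬝ᵥ W.mulVec ((R2 (ψ t))ᵀ.mulVec (n t)) := by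
    simp only [mulVec_add, mulVec_mulVec, mulVec_smul, Matrix.mul_assoc,
      hcancel, add_mulVec, smul_mulVec, dotProduct_add, dotProduct_smul, smul_eq_mul]
  have hquad := affine_nonpos (quadForm_of_lmi hPt hLMImin (z t))
    (quadForm_of_lmi hPt hLMImax (z t)) (hrt t)
  have hdist := dotProduct_mulVec_le (P * Bωp) (z t) (ω t) (hω t)
  have hnoise := dotProduct_mulVec_le W (z t) _
    ((euclNorm_R2_transpose_mulVec (ψ t) (n t)).trans_le (hn t))
  have hball := mul_le_mul_of_nonneg_left ((div_le_iff₀ hθ.1).1 ht) (euclNorm_nonneg (z t))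
  rw [hexp]
  rw [← euclNorm_sq] at hquad
  linarith
end
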